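/- Non-degenerate p-growth of the homogenized energy density (Lemma 3.8 of the paper): assume Assumption H. Then there exists a constant c₁' > 0 such that for all F ∈ ℝ^{n×d}: (1/c₁')|F|^p − c₁' ≤ W₀(F) ≤ c₁'(1 + |F|^p). -/

import Mathlib

open MeasureTheory Filter Metric Set
open scoped Classical
open scoped ENNReal Topology Pointwise

noncomputable section

namespace StochHom

/-- `ℝ^d` with the Euclidean norm. -/
abbrev Rd (d : ℕ) : Type := EuclideanSpace ℝ (Fin d)

/-- `ℝ^n` with the Euclidean norm. -/
abbrev Rn (n : ℕ) : Type := EuclideanSpace ℝ (Fin n)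

/-- The lattice `ℤ^d`. -/
abbrev Zd (d : ℕ) : Type := Fin d → ℤ

variable {d n : ℕ}

/-- The embedding of the lattice `ℤ^d` into `ℝ^d`. -/
def toRd (z : Zd d) : Rd d := (EuclideanSpace.equiv (Fin d) ℝ).symm fun i => (z i : ℝ)

/-- The standard basis vectors `eᵢ` of `ℤ^d`. -/
def stdb (i : Fin d) : Zd d := fun j => if j = i then 1 else 0

/-- The interaction range `R = max {4√d, max_{b ∈ ℰ₀} |b|}`. -/
def irange (d : ℕ) (E0 : Finset (Zd d)) : ℝ :=
  max (4 * Real.sqrt d) (sSup ((fun b : Zd d => ‖toRd b‖) '' (E0 : Set (Zd d))))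

variable {Ω : Type*} [MeasurableSpace Ω]

/-- The energy `E₁(ω; u, ℤ^d ∩ A)`. -/
def energy1 (τ : Zd d → Ω → Ω) (E0 : Finset (Zd d)) (V : Zd d → Ω → Rn n → ℝ)
    (ω : Ω) (u : Zd d → Rn n) (A : Set (Rd d)) : ℝ :=
  ∑' z : Zd d, if toRd z ∈ A then
      ∑ b ∈ E0, V b (τ z ω) ((‖toRd b‖)⁻¹ • (u (z + b) - u z)) else 0

/-- The scaled energy `E_ε(ω; u, A)`, where a function `u : εℤ^d → ℝ^n` is identified with a
function on `ℤ^d` via `z ↦ u(εz)`, so that `∂_b^ε u (z) = (u (z+b) - u z)/(ε |b|)`. -/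
def energyE (τ : Zd d → Ω → Ω) (E0 : Finset (Zd d)) (V : Zd d → Ω → Rn n → ℝ)
    (ε : ℝ) (ω : Ω) (u : Zd d → Rn n) (A : Set (Rd d)) : ℝ :=
  ε ^ d * ∑' z : Zd d, if ε • toRd z ∈ A then
      ∑ b ∈ E0, V b (τ z ω) ((ε * ‖toRd b‖)⁻¹ • (u (z + b) - u z)) else 0

/-- The localized minimal energy `m_F(ω; A)`. -/
def mF (τ : Zd d → Ω → Ω) (E0 : Finset (Zd d)) (V : Zd d → Ω → Rn n → ℝ)
    (ω : Ω) (F : Rd d →L[ℝ] Rn n) (A : Set (Rd d)) : ℝ :=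
  ⨅ φ : {φ : Zd d → Rn n // ∀ z : Zd d, infDist (toRd z) Aᶜ ≤ irange d E0 → φ z = 0},
    energy1 τ E0 V ω (fun z => F (toRd z) + φ.1 z) A

/-- The half-open cube `[0,k)^d ⊂ ℝ^d`. -/
def cube (d k : ℕ) : Set (Rd d) := {x | ∀ i, 0 ≤ x i ∧ x i < (k : ℝ)}

/-- The homogenized energy density `W₀(F) = inf_{k ≥ 1} k⁻ᵈ E[m_F(·, [0,k)^d)]`. -/
def W0 (P : Measure Ω) (τ : Zd d → Ω → Ω) (E0 : Finset (Zd d))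
    (V : Zd d → Ω → Rn n → ℝ) (F : Rd d →L[ℝ] Rn n) : ℝ :=
  ⨅ k : {k : ℕ // 0 < k}, (((k : ℕ) : ℝ) ^ d)⁻¹ * ∫ ω, mF τ E0 V ω F (cube d k) ∂P

/-- Half-open axis-parallel box `Π_i [aᵢ, bᵢ)`. -/
def halfBox (a b : Fin d → ℝ) : Set (Rd d) := {x | ∀ i, a i ≤ x i ∧ x i < b i}

/-- Open axis-parallel box `Π_i (aᵢ, bᵢ)`. -/
def openBox (a b : Fin d → ℝ) : Set (Rd d) := {x | ∀ i, a i < x i ∧ x i < b i}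

/-- Closed axis-parallel box `Π_i [aᵢ, bᵢ]`. -/
def closedBox (a b : Fin d → ℝ) : Set (Rd d) := {x | ∀ i, a i ≤ x i ∧ x i ≤ b i}

/-- Half-open axis-parallel box with integer corners. -/
def intBox (a b : Zd d) : Set (Rd d) := {x | ∀ i, (a i : ℝ) ≤ x i ∧ x i < (b i : ℝ)}

/-- The periodic cell minimization `W^{(k)}(ω; F)`. -/
def Wper (τ : Zd d → Ω → Ω) (E0 : Finset (Zd d)) (V : Zd d → Ω → Rn n → ℝ)
    (k : ℕ) (ω : Ω) (F : Rd d →L[ℝ] Rn n) : ℝ :=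
  ⨅ φ : {φ : Zd d → Rn n // ∀ z z' : Zd d, φ (z + k • z') = φ z},
    ((k : ℝ) ^ d)⁻¹ * energy1 τ E0 V ω (fun z => F (toRd z) + φ.1 z) (cube d k)

/-!
The upper bound tests `m_F` with `φ = 0` on the unit cube. For the lower bound, an admissible `φ`
vanishes near the boundary of the cube, so the sum of its discrete derivatives along a bond `b`
telescopes to zero and the derivative of `g_F + φ` has mean `F b / |b|`, whatever the competitor.
Young's inequality bounds `λ |r|^p` from below by a function that is affine in `|r|`, at the price
of the dual weight `λ^{-1/(p-1)}`; this bound survives averaging over the cube, no longer depends on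
`φ`, and by stationarity its expectation does not depend on the cube. Optimizing the slope of the
affine function gives `W₀(F) ≥ c⁻¹ E[λ^{-1/(p-1)}]^{1-p} (|F b| / |b|)^p - c E[λ]`, and the
directions `b = eᵢ` control `|F|`.
-/

section PowerInequalities

variable {p : ℝ}

lemma mul_rpow_sub_one_mul_sub_le_rpow (hp : 1 < p) {x y : ℝ} (hx : 0 ≤ x) (hy : 0 ≤ y) :
    p * y ^ (p - 1) * x - (p - 1) * y ^ p ≤ x ^ p := by
  have hp₁ : 0 < p - 1 := sub_pos.2 hp
  have young := Real.young_inequality_of_nonneg hx (Real.rpow_nonneg hy (p - 1))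
    (Real.HolderConjugate.conjExponent hp)
  have hpow : (y ^ (p - 1)) ^ p.conjExponent = y ^ p := by
    rw [← Real.rpow_mul hy, Real.conjExponent, mul_div_cancel₀ _ hp₁.ne']
  rw [hpow, Real.conjExponent] at young
  calc p * y ^ (p - 1) * x - (p - 1) * y ^ p
      = p * (x * y ^ (p - 1)) - (p - 1) * y ^ p := by ring
    _ ≤ p * (x ^ p / p + y ^ p / (p / (p - 1))) - (p - 1) * y ^ p := by gcongr
    _ = x ^ p := by field_simp; ring

lemma mul_rpow_sub_one_mul_sub_le_mul_rpow (hp : 1 < p) {w x t : ℝ} (hw : 0 < w) (hx : 0 ≤ x)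
    (ht : 0 ≤ t) :
    p * t ^ (p - 1) * x - (p - 1) * t ^ p * w ^ (-(1 / (p - 1))) ≤ w * x ^ p := by
  have hp₁ : 0 < p - 1 := sub_pos.2 hp
  -- The tangent of `x ↦ w * x ^ p` has slope `p * t ^ (p - 1)` at this point.
  set y := t * w ^ (-(1 / (p - 1))) with hy
  have hslope : w * y ^ (p - 1) = t ^ (p - 1) := by
    rw [hy, Real.mul_rpow ht (by positivity), ← Real.rpow_mul hw.le,
      show -(1 / (p - 1)) * (p - 1) = -1 by field_simp, Real.rpow_neg_one]
    field_simp
  have hvalue : w * y ^ p = t ^ p * w ^ (-(1 / (p - 1))) := by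
    have hexp : w ^ (-(1 / (p - 1)) * p) * w = w ^ (-(1 / (p - 1))) := by
      rw [← Real.rpow_add_one hw.ne']
      congr 1
      field_simp
      ring
    rw [hy, Real.mul_rpow ht (by positivity), ← Real.rpow_mul hw.le, ← hexp]
    ring
  calc p * t ^ (p - 1) * x - (p - 1) * t ^ p * w ^ (-(1 / (p - 1)))
      = w * (p * y ^ (p - 1) * x - (p - 1) * y ^ p) := by
        linear_combination (-p * x) * hslope + (p - 1) * hvalue
    _ ≤ w * x ^ p := by
        gcongr
        exact mul_rpow_sub_one_mul_sub_le_rpow hp hx (by positivity)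

lemma mul_div_rpow_sub_one_mul_sub (hp : p ≠ 0) {x M : ℝ} (hx : 0 ≤ x) (hM : 0 < M) :
    p * (x / M) ^ (p - 1) * x - (p - 1) * (x / M) ^ p * M = M ^ (1 - p) * x ^ p := by
  have hstep : (x / M) ^ (p - 1) * (x / M) = (x / M) ^ p := by
    rw [← Real.rpow_add_one' (by positivity) (by simpa using hp), sub_add_cancel]
  have hpow : M * (x / M) ^ p = M ^ (1 - p) * x ^ p := by
    rw [Real.div_rpow hx hM.le, Real.rpow_sub hM, Real.rpow_one]
    ring
  have hx' : x = x / M * M := by field_simp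
  calc p * (x / M) ^ (p - 1) * x - (p - 1) * (x / M) ^ p * M
      = p * ((x / M) ^ (p - 1) * (x / M)) * M - (p - 1) * (x / M) ^ p * M := by
        linear_combination p * (x / M) ^ (p - 1) * hx'
    _ = M * (x / M) ^ p := by rw [hstep]; ring
    _ = M ^ (1 - p) * x ^ p := hpow

lemma sum_le_sum_mul_rpow_norm_of_sum_eq_card_nsmul {ι E : Type*} [SeminormedAddCommGroup E]
    [NormedSpace ℝ E] (hp : 1 < p) {S : Finset ι} {w : ι → ℝ} {u : ι → E} {v : E} {t : ℝ}
    (hw : ∀ z ∈ S, 0 < w z) (hu : ∑ z ∈ S, u z = S.card • v) (ht : 0 ≤ t) :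
    ∑ z ∈ S, (p * t ^ (p - 1) * ‖v‖ - (p - 1) * t ^ p * w z ^ (-(1 / (p - 1)))) ≤
      ∑ z ∈ S, w z * ‖u z‖ ^ p := by
  have hmean : ∑ _z ∈ S, ‖v‖ ≤ ∑ z ∈ S, ‖u z‖ := by
    simpa [hu, ← Nat.cast_smul_eq_nsmul ℝ, norm_smul] using norm_sum_le S u
  calc ∑ z ∈ S, (p * t ^ (p - 1) * ‖v‖ - (p - 1) * t ^ p * w z ^ (-(1 / (p - 1))))
      = p * t ^ (p - 1) * ∑ _z ∈ S, ‖v‖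
          - ∑ z ∈ S, (p - 1) * t ^ p * w z ^ (-(1 / (p - 1))) := by
        rw [Finset.sum_sub_distrib, Finset.mul_sum]
    _ ≤ p * t ^ (p - 1) * ∑ z ∈ S, ‖u z‖
          - ∑ z ∈ S, (p - 1) * t ^ p * w z ^ (-(1 / (p - 1))) := by gcongr
    _ = ∑ z ∈ S, (p * t ^ (p - 1) * ‖u z‖ - (p - 1) * t ^ p * w z ^ (-(1 / (p - 1)))) := by
        rw [Finset.sum_sub_distrib, Finset.mul_sum]
    _ ≤ ∑ z ∈ S, w z * ‖u z‖ ^ p := Finset.sum_le_sum fun z hz =>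
        mul_rpow_sub_one_mul_sub_le_mul_rpow hp (hw z hz) (norm_nonneg _) ht

lemma exists_rpow_opNorm_le_of_basis {ι E G : Type*} [Finite ι] [NormedAddCommGroup E]
    [NormedSpace ℝ E] [NormedAddCommGroup G] [NormedSpace ℝ G] (v : Module.Basis ι ℝ E)
    (hp : 0 < p) :
    ∃ B > 0, ∀ (u : E →L[ℝ] G) {N : ℝ}, 0 ≤ N → (∀ i, ‖u (v i)‖ ^ p ≤ N) → ‖u‖ ^ p ≤ B * N := by
  obtain ⟨B, hB, hv⟩ := v.exists_opNorm_le (F := G)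
  refine ⟨B ^ p, by positivity, fun u N hN hu => ?_⟩
  have hnorm : ‖u‖ ≤ B * N ^ p⁻¹ := hv (by positivity) fun i =>
    (Real.le_rpow_inv_iff_of_pos (norm_nonneg _) hN hp).2 (hu i)
  calc ‖u‖ ^ p ≤ (B * N ^ p⁻¹) ^ p := by gcongr
    _ = B ^ p * N := by
      rw [Real.mul_rpow hB.le (by positivity), Real.rpow_inv_rpow hN hp.ne']

lemma ennreal_rpow_le_one_add_rpow {s t : ℝ} (hs : 0 ≤ s) (hst : s ≤ t) (x : ℝ≥0∞) :
    x ^ s ≤ 1 + x ^ t := by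
  rcases le_total x 1 with hx | hx
  · exact (ENNReal.rpow_le_one hx hs).trans le_self_add
  · exact (ENNReal.rpow_le_rpow_of_exponent_le hx hst).trans le_add_self

end PowerInequalities

lemma measurable_iInf_of_continuous {X α : Type*} [TopologicalSpace X]
    [TopologicalSpace.SeparableSpace X] [ConditionallyCompleteLinearOrder α] [TopologicalSpace α]
    [OrderTopology α] [SecondCountableTopology α] [MeasurableSpace α] [BorelSpace α]
    {f : Ω → X → α} (hcont : ∀ ω, Continuous (f ω)) (hmeas : ∀ x, Measurable fun ω => f ω x) :
    Measurable fun ω => ⨅ x, f ω x := by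
  obtain ⟨S, hS, hdense⟩ := TopologicalSpace.exists_countable_dense X
  have : Countable S := hS
  simp only [← hdense.ciInf' (hcont _)]
  exact .iInf fun x => hmeas x

section Moments

variable {μ : Measure Ω}

lemma lintegral_rpow_lt_top_of_le [IsFiniteMeasure μ] {f : Ω → ℝ≥0∞} {s t : ℝ} (hs : 0 ≤ s)
    (hst : s ≤ t) (hf : ∫⁻ ω, f ω ^ t ∂μ < ⊤) : ∫⁻ ω, f ω ^ s ∂μ < ⊤ :=
  calc ∫⁻ ω, f ω ^ s ∂μ ≤ ∫⁻ ω, (1 + f ω ^ t) ∂μ :=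
        lintegral_mono fun ω => ennreal_rpow_le_one_add_rpow hs hst (f ω)
    _ = μ univ + ∫⁻ ω, f ω ^ t ∂μ := by
        rw [lintegral_add_left measurable_const, lintegral_one]
    _ < ⊤ := ENNReal.add_lt_top.2 ⟨measure_lt_top μ univ, hf⟩

lemma lintegral_rpow_neg_lt_top_of_le [IsFiniteMeasure μ] {f : Ω → ℝ≥0∞} {s t : ℝ} (hs : 0 ≤ s)
    (hst : s ≤ t) (hf : ∫⁻ ω, f ω ^ (-t) ∂μ < ⊤) : ∫⁻ ω, f ω ^ (-s) ∂μ < ⊤ := by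
  simp only [← ENNReal.inv_rpow, ENNReal.rpow_neg] at hf ⊢
  exact lintegral_rpow_lt_top_of_le hs hst hf

lemma integrable_rpow_of_lintegral_lt_top {f : Ω → ℝ} (hf : AEMeasurable f μ)
    (hf₀ : ∀ ω, 0 ≤ f ω) {s : ℝ} (hs : ∫⁻ ω, ENNReal.ofReal (f ω) ^ s ∂μ < ⊤) :
    Integrable (fun ω => f ω ^ s) μ := by
  refine (integrable_toReal_of_lintegral_ne_top (hf.ennreal_ofReal.pow_const s) hs.ne).congr
    (.of_forall fun ω => ?_)
  simp only [← ENNReal.toReal_rpow, ENNReal.toReal_ofReal (hf₀ ω)]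

lemma integrable_of_lintegral_ofReal_rpow_lt_top [IsFiniteMeasure μ] {f : Ω → ℝ}
    (hf : AEMeasurable f μ) (hf₀ : ∀ ω, 0 ≤ f ω) {s : ℝ} (hs : 1 ≤ s)
    (hfs : ∫⁻ ω, ENNReal.ofReal (f ω ^ s) ∂μ < ⊤) : Integrable f μ := by
  simp only [← ENNReal.ofReal_rpow_of_nonneg (hf₀ _) (zero_le_one.trans hs)] at hfs
  simpa only [Real.rpow_one] using integrable_rpow_of_lintegral_lt_top hf hf₀
    (lintegral_rpow_lt_top_of_le zero_le_one hs hfs)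

lemma ae_pos_of_lintegral_rpow_neg_lt_top {f : Ω → ℝ} (hf : AEMeasurable f μ) {s : ℝ} (hs : 0 < s)
    (hfs : ∫⁻ ω, ENNReal.ofReal (f ω) ^ (-s) ∂μ < ⊤) : ∀ᵐ ω ∂μ, 0 < f ω := by
  filter_upwards [ae_lt_top' (hf.ennreal_ofReal.pow_const (-s)) hfs.ne] with ω hω
  contrapose! hω
  rw [ENNReal.ofReal_of_nonpos hω, ENNReal.zero_rpow_of_neg (neg_lt_zero.2 hs)]

lemma integral_pos_of_ae_pos [NeZero μ] {f : Ω → ℝ} (hf : Integrable f μ)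
    (hpos : ∀ᵐ ω ∂μ, 0 < f ω) : 0 < ∫ ω, f ω ∂μ := by
  have hsupp : Function.support f =ᵐ[μ] univ :=
    eventuallyEq_univ.2 (hpos.mono fun _ hω => hω.ne')
  rw [integral_pos_iff_support_of_nonneg_ae (hpos.mono fun _ => le_of_lt) hf, measure_congr hsupp]
  exact Measure.measure_univ_pos.2 (NeZero.ne μ)

end Moments

section MeasurePreserving

variable {μ : Measure Ω}

lemma integral_comp_of_measurePreserving {Ω' E : Type*} [MeasurableSpace Ω'] {ν : Measure Ω'}
    [NormedAddCommGroup E] [NormedSpace ℝ E] {T : Ω → Ω'} (hT : MeasurePreserving T μ ν)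
    {f : Ω' → E} (hf : AEStronglyMeasurable f ν) : ∫ ω, f (T ω) ∂μ = ∫ ω, f ω ∂ν := by
  rw [← hT.map_eq] at hf ⊢
  exact (integral_map hT.aemeasurable hf).symm

variable {ι : Type*} {T : ι → Ω → Ω} {f : Ω → ℝ}

lemma integrable_sum_comp_of_measurePreserving (hT : ∀ z, MeasurePreserving (T z) μ μ)
    (hf : Integrable f μ) (S : Finset ι) : Integrable (fun ω => ∑ z ∈ S, f (T z ω)) μ :=
  integrable_finsetSum S fun z _ => (hT z).integrable_comp_of_integrable hf

lemma integral_sum_comp_of_measurePreserving (hT : ∀ z, MeasurePreserving (T z) μ μ)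
    (hf : Integrable f μ) (S : Finset ι) :
    ∫ ω, ∑ z ∈ S, f (T z ω) ∂μ = S.card * ∫ ω, f ω ∂μ := by
  have hint : ∀ z ∈ S, Integrable (fun ω => f (T z ω)) μ :=
    fun z _ => (hT z).integrable_comp_of_integrable hf
  simp only [integral_finsetSum S hint, Finset.sum_const, nsmul_eq_mul,
    integral_comp_of_measurePreserving (hT _) hf.aestronglyMeasurable]

end MeasurePreserving


section Lattice

lemma toRd_add (z w : Zd d) : toRd (z + w) = toRd z + toRd w := by
  ext i
  simp [toRd]

lemma toRd_stdb (i : Fin d) : toRd (stdb i) = EuclideanSpace.single i 1 := by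
  ext j
  simp [toRd, stdb]

/-- The set `ℤ^d ∩ [0,k)^d` of lattice sites of the cube, as a finite set. -/
def cubeLattice (d k : ℕ) : Finset (Zd d) := Fintype.piFinset fun _ => Finset.Ico 0 (k : ℤ)

lemma toRd_mem_cube_iff {k : ℕ} {z : Zd d} : toRd z ∈ cube d k ↔ z ∈ cubeLattice d k := by
  simp only [cube, cubeLattice, Fintype.mem_piFinset, Finset.mem_Ico]
  refine forall_congr' fun i => and_congr ?_ ?_
  · exact Int.cast_nonneg_iff
  · change (z i : ℝ) < ((k : ℕ) : ℝ) ↔ z i < (k : ℤ)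
    norm_cast

lemma card_cubeLattice (d k : ℕ) : (cubeLattice d k).card = k ^ d := by
  simp [cubeLattice]

lemma irange_nonneg (E0 : Finset (Zd d)) : 0 ≤ irange d E0 :=
  le_max_of_le_left (by positivity)

lemma norm_toRd_le_irange {E0 : Finset (Zd d)} {b : Zd d} (hb : b ∈ E0) :
    ‖toRd b‖ ≤ irange d E0 :=
  le_max_of_le_right <|
    le_csSup (E0.finite_toSet.image _).bddAbove (mem_image_of_mem _ (Finset.mem_coe.2 hb))

lemma sum_comp_add_right_eq_sum {A M : Type*} [AddGroup A] [AddCommMonoid M] {S : Finset A}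
    {b : A} {φ : A → M} (hφ : ∀ z ∉ S, φ z = 0) (hφb : ∀ z ∉ S, φ (z + b) = 0) :
    ∑ z ∈ S, φ (z + b) = ∑ z ∈ S, φ z := by
  have hS : Function.support φ ⊆ S := fun z hz => not_not.1 fun h => hz (hφ z h)
  have hSb : (Function.support fun z => φ (z + b)) ⊆ S :=
    fun z hz => not_not.1 fun h => hz (hφb z h)
  rw [← finsum_eq_sum_of_support_subset _ hS, ← finsum_eq_sum_of_support_subset _ hSb]
  exact finsum_comp_equiv (Equiv.addRight b)

end Lattice

section Bonds

/-- The bond direction `b / |b|`, with value `0` for `b = 0`. -/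
def bondDir (b : Zd d) : Rd d := ‖toRd b‖⁻¹ • toRd b

/-- The discrete derivative `∂_b u(z) = (u(z + b) - u(z)) / |b|`. -/
def bondDeriv (b : Zd d) (u : Zd d → Rn n) (z : Zd d) : Rn n := ‖toRd b‖⁻¹ • (u (z + b) - u z)

/-- The competitors `φ` in the definition of `m_F(ω; A)`: they vanish at all sites within the
interaction range of the complement of `A`. -/
def IsAdmissible (E0 : Finset (Zd d)) (A : Set (Rd d)) (φ : Zd d → Rn n) : Prop :=
  ∀ z : Zd d, infDist (toRd z) Aᶜ ≤ irange d E0 → φ z = 0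

variable {E0 : Finset (Zd d)} {b : Zd d} {A : Set (Rd d)} {φ : Zd d → Rn n} {z : Zd d}

lemma norm_bondDir_le_one (b : Zd d) : ‖bondDir b‖ ≤ 1 := by
  rw [bondDir, norm_smul, norm_inv, norm_norm]
  exact inv_mul_le_one

lemma bondDir_stdb (i : Fin d) : bondDir (stdb i) = EuclideanSpace.single i 1 := by
  simp [bondDir, toRd_stdb]

lemma continuous_bondDeriv (b z : Zd d) : Continuous fun u : Zd d → Rn n => bondDeriv b u z := by
  unfold bondDeriv
  fun_prop

lemma bondDeriv_add_map_toRd (F : Rd d →L[ℝ] Rn n) (b : Zd d) (φ : Zd d → Rn n) (z : Zd d) :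
    bondDeriv b (fun z => F (toRd z) + φ z) z = F (bondDir b) + bondDeriv b φ z := by
  simp only [bondDeriv, bondDir, toRd_add, map_add, map_smul, ← smul_add]
  congr 1
  abel

lemma IsAdmissible.zero (E0 : Finset (Zd d)) (A : Set (Rd d)) :
    IsAdmissible E0 A (0 : Zd d → Rn n) :=
  fun _ _ => rfl

lemma IsAdmissible.apply_eq_zero (hφ : IsAdmissible E0 A φ) (hz : toRd z ∉ A) : φ z = 0 :=
  hφ z <| (infDist_zero_of_mem (mem_compl hz)).trans_le (irange_nonneg E0)

lemma IsAdmissible.apply_add_eq_zero (hφ : IsAdmissible E0 A φ) (hb : b ∈ E0)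
    (hz : toRd z ∉ A) : φ (z + b) = 0 :=
  hφ (z + b) <| calc
    infDist (toRd (z + b)) Aᶜ ≤ dist (toRd (z + b)) (toRd z) :=
      infDist_le_dist_of_mem (mem_compl hz)
    _ = ‖toRd b‖ := by rw [toRd_add, dist_self_add_left]
    _ ≤ irange d E0 := norm_toRd_le_irange hb

lemma IsAdmissible.sum_bondDeriv_eq_zero {k : ℕ} (hφ : IsAdmissible E0 (cube d k) φ)
    (hb : b ∈ E0) : ∑ z ∈ cubeLattice d k, bondDeriv b φ z = 0 := by
  have hshift : ∑ z ∈ cubeLattice d k, φ (z + b) = ∑ z ∈ cubeLattice d k, φ z :=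
    sum_comp_add_right_eq_sum
      (fun _ hz => hφ.apply_eq_zero (mt toRd_mem_cube_iff.1 hz))
      (fun _ hz => hφ.apply_add_eq_zero hb (mt toRd_mem_cube_iff.1 hz))
  simp only [bondDeriv]
  rw [← Finset.smul_sum, Finset.sum_sub_distrib, hshift, sub_self, smul_zero]

lemma IsAdmissible.sum_bondDeriv_add_map_toRd {k : ℕ} (hφ : IsAdmissible E0 (cube d k) φ)
    (hb : b ∈ E0) (F : Rd d →L[ℝ] Rn n) :
    ∑ z ∈ cubeLattice d k, bondDeriv b (fun z => F (toRd z) + φ z) z =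
      (cubeLattice d k).card • F (bondDir b) := by
  simp only [bondDeriv_add_map_toRd, Finset.sum_add_distrib, hφ.sum_bondDeriv_eq_zero hb,
    Finset.sum_const, add_zero]

end Bonds

/-- The energy per lattice site of the affine function `g_F(x) = F x`. -/
def affineEnergy {Ω : Type*} (E0 : Finset (Zd d)) (V : Zd d → Ω → Rn n → ℝ) (F : Rd d →L[ℝ] Rn n)
    (ω : Ω) : ℝ :=
  ∑ b ∈ E0, V b ω (F (bondDir b))

/-- A lower bound, per lattice site, for the energy of bonds of weight `l` along which the
derivative has mean `v` with `|v| = a`. The parameter `t` is free: it fixes the tangent line in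
Young's inequality `p t^{p-1} a ≤ l a^p + (p - 1) t^p l^{-1/(p-1)}`. -/
def youngMinorant (p c t a l : ℝ) : ℝ :=
  c⁻¹ * (p * t ^ (p - 1) * a - (p - 1) * t ^ p * l ^ (-(1 / (p - 1)))) - c * l

section Deterministic

variable {Ω : Type*} {τ : Zd d → Ω → Ω} {E0 : Finset (Zd d)} {V : Zd d → Ω → Rn n → ℝ} {ω : Ω}

lemma affineEnergy_le {lam : Zd d → Ω → ℝ} {p c : ℝ} (hp : 0 ≤ p) (hc : 0 ≤ c)
    (hlam : ∀ b ∈ E0, ∀ ω, 0 ≤ lam b ω)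
    (hVu : ∀ b ∈ E0, ∀ ω r, V b ω r ≤ c * (1 + lam b ω * (‖r‖ ^ p + 1))) (F : Rd d →L[ℝ] Rn n)
    (ω : Ω) :
    affineEnergy E0 V F ω ≤ c * (∑ b ∈ E0, (1 + lam b ω)) * (1 + ‖F‖ ^ p) := by
  rw [affineEnergy, Finset.mul_sum, Finset.sum_mul]
  refine Finset.sum_le_sum fun b hb => ?_
  have hlamb := hlam b hb ω
  calc V b ω (F (bondDir b)) ≤ c * (1 + lam b ω * (‖F (bondDir b)‖ ^ p + 1)) := hVu b hb _ _
    _ ≤ c * (1 + lam b ω * (‖F‖ ^ p + 1)) := by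
        gcongr
        exact F.unit_le_opNorm _ (norm_bondDir_le_one b)
    _ ≤ c * ((1 + ‖F‖ ^ p) + lam b ω * (‖F‖ ^ p + 1)) := by
        gcongr
        exact le_add_of_nonneg_right (by positivity)
    _ = c * (1 + lam b ω) * (1 + ‖F‖ ^ p) := by ring

lemma energy1_nonneg (hV : ∀ b ∈ E0, ∀ ω r, 0 ≤ V b ω r) (u : Zd d → Rn n) (A : Set (Rd d)) :
    0 ≤ energy1 τ E0 V ω u A :=
  tsum_nonneg fun z => by
    split_ifs
    · exact Finset.sum_nonneg fun b hb => hV b hb _ _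
    · exact le_rfl

lemma energy1_cube (τ : Zd d → Ω → Ω) (E0 : Finset (Zd d)) (V : Zd d → Ω → Rn n → ℝ) (ω : Ω)
    (u : Zd d → Rn n) (k : ℕ) :
    energy1 τ E0 V ω u (cube d k) =
      ∑ z ∈ cubeLattice d k, ∑ b ∈ E0, V b (τ z ω) (bondDeriv b u z) := by
  rw [energy1, tsum_eq_sum fun z hz => if_neg (mt toRd_mem_cube_iff.1 hz)]
  exact Finset.sum_congr rfl fun z hz => if_pos (toRd_mem_cube_iff.2 hz)

lemma mF_eq_iInf_isAdmissible (τ : Zd d → Ω → Ω) (E0 : Finset (Zd d)) (V : Zd d → Ω → Rn n → ℝ)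
    (ω : Ω) (F : Rd d →L[ℝ] Rn n) (A : Set (Rd d)) :
    mF τ E0 V ω F A =
      ⨅ φ : {φ // IsAdmissible E0 A φ}, energy1 τ E0 V ω (fun z => F (toRd z) + φ.1 z) A :=
  rfl

lemma le_mF {F : Rd d →L[ℝ] Rn n} {A : Set (Rd d)} {a : ℝ}
    (h : ∀ φ, IsAdmissible E0 A φ → a ≤ energy1 τ E0 V ω (fun z => F (toRd z) + φ z) A) :
    a ≤ mF τ E0 V ω F A := by
  have : Nonempty {φ : Zd d → Rn n // IsAdmissible E0 A φ} := ⟨0, .zero E0 A⟩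
  rw [mF_eq_iInf_isAdmissible]
  exact le_ciInf fun φ => h φ.1 φ.2

lemma mF_nonneg (hV : ∀ b ∈ E0, ∀ ω r, 0 ≤ V b ω r) (F : Rd d →L[ℝ] Rn n) (A : Set (Rd d)) :
    0 ≤ mF τ E0 V ω F A :=
  le_mF fun _ _ => energy1_nonneg hV _ A

lemma mF_cube_le_sum_affineEnergy (hV : ∀ b ∈ E0, ∀ ω r, 0 ≤ V b ω r) (F : Rd d →L[ℝ] Rn n)
    (k : ℕ) :
    mF τ E0 V ω F (cube d k) ≤ ∑ z ∈ cubeLattice d k, affineEnergy E0 V F (τ z ω) := by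
  have hbdd : BddBelow (range fun φ : {φ // IsAdmissible E0 (cube d k) φ} =>
      energy1 τ E0 V ω (fun z => F (toRd z) + φ.1 z) (cube d k)) :=
    ⟨0, forall_mem_range.2 fun _ => energy1_nonneg hV _ _⟩
  calc mF τ E0 V ω F (cube d k)
      ≤ energy1 τ E0 V ω (fun z => F (toRd z) + (0 : Zd d → Rn n) z) (cube d k) :=
        ciInf_le hbdd ⟨0, .zero E0 (cube d k)⟩
    _ = ∑ z ∈ cubeLattice d k, affineEnergy E0 V F (τ z ω) := by
        simp only [energy1_cube, bondDeriv_add_map_toRd, affineEnergy]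
        simp [bondDeriv]

lemma sum_youngMinorant_le_sum_bond_energy {k : ℕ} {φ : Zd d → Rn n} {b : Zd d} {l : Ω → ℝ}
    {p c t : ℝ} (hp : 1 < p) (hc : 0 < c) (ht : 0 ≤ t) (hl : ∀ z, 0 < l (τ z ω))
    (hVl : ∀ ω r, l ω * (‖r‖ ^ p / c - c) ≤ V b ω r) (hb : b ∈ E0)
    (hφ : IsAdmissible E0 (cube d k) φ) (F : Rd d →L[ℝ] Rn n) :
    ∑ z ∈ cubeLattice d k, youngMinorant p c t ‖F (bondDir b)‖ (l (τ z ω)) ≤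
      ∑ z ∈ cubeLattice d k, V b (τ z ω) (bondDeriv b (fun z => F (toRd z) + φ z) z) := by
  set u : Zd d → Rn n := fun z => F (toRd z) + φ z
  have young := sum_le_sum_mul_rpow_norm_of_sum_eq_card_nsmul hp (fun z _ => hl z)
    (hφ.sum_bondDeriv_add_map_toRd hb F) ht
  calc ∑ z ∈ cubeLattice d k, youngMinorant p c t ‖F (bondDir b)‖ (l (τ z ω))
      = c⁻¹ * ∑ z ∈ cubeLattice d k, (p * t ^ (p - 1) * ‖F (bondDir b)‖
          - (p - 1) * t ^ p * l (τ z ω) ^ (-(1 / (p - 1))))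
          - ∑ z ∈ cubeLattice d k, c * l (τ z ω) := by
        rw [Finset.mul_sum, ← Finset.sum_sub_distrib]
        rfl
    _ ≤ c⁻¹ * ∑ z ∈ cubeLattice d k, l (τ z ω) * ‖bondDeriv b u z‖ ^ p
          - ∑ z ∈ cubeLattice d k, c * l (τ z ω) := by gcongr
    _ = ∑ z ∈ cubeLattice d k, l (τ z ω) * (‖bondDeriv b u z‖ ^ p / c - c) := by
        rw [Finset.mul_sum, ← Finset.sum_sub_distrib]
        exact Finset.sum_congr rfl fun z _ => by ring
    _ ≤ ∑ z ∈ cubeLattice d k, V b (τ z ω) (bondDeriv b u z) :=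
        Finset.sum_le_sum fun z _ => hVl _ _

lemma sum_youngMinorant_le_mF_cube {b : Zd d} {l : Ω → ℝ} {p c t : ℝ} (hp : 1 < p) (hc : 0 < c)
    (ht : 0 ≤ t) (hl : ∀ z, 0 < l (τ z ω)) (hV : ∀ b ∈ E0, ∀ ω r, 0 ≤ V b ω r)
    (hVl : ∀ ω r, l ω * (‖r‖ ^ p / c - c) ≤ V b ω r) (hb : b ∈ E0) (F : Rd d →L[ℝ] Rn n)
    (k : ℕ) :
    ∑ z ∈ cubeLattice d k, youngMinorant p c t ‖F (bondDir b)‖ (l (τ z ω)) ≤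
      mF τ E0 V ω F (cube d k) := by
  refine le_mF fun φ hφ => (sum_youngMinorant_le_sum_bond_energy hp hc ht hl hVl hb hφ F).trans ?_
  rw [energy1_cube]
  refine Finset.sum_le_sum fun z _ => ?_
  exact Finset.single_le_sum
    (f := fun b => V b (τ z ω) (bondDeriv b (fun z => F (toRd z) + φ z) z))
    (fun b hb => hV b hb _ _) hb

end Deterministic

section Integrability

variable {P : Measure Ω} {τ : Zd d → Ω → Ω} {E0 : Finset (Zd d)} {V : Zd d → Ω → Rn n → ℝ}

lemma measurable_mF_cube (hτ : ∀ z, Measurable (τ z))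
    (hVmeas : ∀ b ∈ E0, Measurable fun q : Ω × Rn n => V b q.1 q.2)
    (hVcont : ∀ b ∈ E0, ∀ ω, Continuous (V b ω)) (F : Rd d →L[ℝ] Rn n) (k : ℕ) :
    Measurable fun ω => mF τ E0 V ω F (cube d k) := by
  simp only [mF_eq_iInf_isAdmissible, energy1_cube, bondDeriv_add_map_toRd]
  have : SecondCountableTopology {φ : Zd d → Rn n // IsAdmissible E0 (cube d k) φ} :=
    TopologicalSpace.Subtype.secondCountableTopology {φ | IsAdmissible E0 (cube d k) φ}
  refine measurable_iInf_of_continuous (fun ω => ?_) (fun φ => ?_)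
  · exact continuous_finsetSum _ fun z _ => continuous_finsetSum _ fun b hb =>
      (hVcont b hb _).comp <|
        continuous_const.add ((continuous_bondDeriv b z).comp continuous_subtype_val)
  · exact Finset.measurable_sum _ fun z _ => Finset.measurable_sum _ fun b hb =>
      (hVmeas b hb).comp ((hτ z).prodMk measurable_const)

lemma integrable_affineEnergy [IsFiniteMeasure P]
    (hVmeas : ∀ b ∈ E0, Measurable fun q : Ω × Rn n => V b q.1 q.2)
    (hV : ∀ b ∈ E0, ∀ ω r, 0 ≤ V b ω r) {lam : Zd d → Ω → ℝ} {p c : ℝ}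
    (hlam : ∀ b ∈ E0, Integrable (lam b) P)
    (hVu : ∀ b ∈ E0, ∀ ω r, V b ω r ≤ c * (1 + lam b ω * (‖r‖ ^ p + 1)))
    (F : Rd d →L[ℝ] Rn n) : Integrable (affineEnergy E0 V F) P := by
  refine integrable_finsetSum E0 fun b hb => ?_
  have hdom : Integrable (fun ω => c * (1 + lam b ω * (‖F (bondDir b)‖ ^ p + 1))) P :=
    ((integrable_const 1).add ((hlam b hb).mul_const _)).const_mul c
  refine hdom.mono'
    ((hVmeas b hb).comp (measurable_id.prodMk measurable_const)).aestronglyMeasurable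
    (.of_forall fun ω => ?_)
  rw [Real.norm_of_nonneg (hV b hb _ _)]
  exact hVu b hb _ _

lemma integrable_mF_cube (hτ : ∀ z, MeasurePreserving (τ z) P P)
    (hVmeas : ∀ b ∈ E0, Measurable fun q : Ω × Rn n => V b q.1 q.2)
    (hVcont : ∀ b ∈ E0, ∀ ω, Continuous (V b ω)) (hV : ∀ b ∈ E0, ∀ ω r, 0 ≤ V b ω r)
    {F : Rd d →L[ℝ] Rn n} (hF : Integrable (affineEnergy E0 V F) P) (k : ℕ) :
    Integrable (fun ω => mF τ E0 V ω F (cube d k)) P := by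
  refine (integrable_sum_comp_of_measurePreserving hτ hF (cubeLattice d k)).mono'
    (measurable_mF_cube (fun z => (hτ z).measurable) hVmeas hVcont F k).aestronglyMeasurable
    (.of_forall fun ω => ?_)
  rw [Real.norm_of_nonneg (mF_nonneg hV F _)]
  exact mF_cube_le_sum_affineEnergy hV F k

end Integrability

section HomogenizedDensity

variable {P : Measure Ω} {τ : Zd d → Ω → Ω} {E0 : Finset (Zd d)} {V : Zd d → Ω → Rn n → ℝ}
  {F : Rd d →L[ℝ] Rn n}

lemma W0_nonneg (hV : ∀ b ∈ E0, ∀ ω r, 0 ≤ V b ω r) : 0 ≤ W0 P τ E0 V F :=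
  Real.iInf_nonneg fun _ => mul_nonneg (by positivity) (integral_nonneg fun _ => mF_nonneg hV F _)

lemma W0_le_integral_affineEnergy (hτ : ∀ z, MeasurePreserving (τ z) P P)
    (hV : ∀ b ∈ E0, ∀ ω r, 0 ≤ V b ω r) (hF : Integrable (affineEnergy E0 V F) P) :
    W0 P τ E0 V F ≤ ∫ ω, affineEnergy E0 V F ω ∂P := by
  have hbdd : BddBelow (range fun k : {k : ℕ // 0 < k} =>
      (((k : ℕ) : ℝ) ^ d)⁻¹ * ∫ ω, mF τ E0 V ω F (cube d k) ∂P) :=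
    ⟨0, forall_mem_range.2 fun _ =>
      mul_nonneg (by positivity) (integral_nonneg fun _ => mF_nonneg hV F _)⟩
  calc W0 P τ E0 V F
      ≤ (((1 : ℕ) : ℝ) ^ d)⁻¹ * ∫ ω, mF τ E0 V ω F (cube d 1) ∂P := ciInf_le hbdd ⟨1, one_pos⟩
    _ = ∫ ω, mF τ E0 V ω F (cube d 1) ∂P := by rw [Nat.cast_one, one_pow, inv_one, one_mul]
    _ ≤ ∫ ω, ∑ z ∈ cubeLattice d 1, affineEnergy E0 V F (τ z ω) ∂P :=
        integral_mono_of_nonneg (.of_forall fun _ => mF_nonneg hV F _)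
          (integrable_sum_comp_of_measurePreserving hτ hF _)
          (.of_forall fun _ => mF_cube_le_sum_affineEnergy hV F 1)
    _ = ∫ ω, affineEnergy E0 V F ω ∂P := by
        rw [integral_sum_comp_of_measurePreserving hτ hF, card_cubeLattice, one_pow, Nat.cast_one,
          one_mul]

lemma integral_le_W0 (hτ : ∀ z, MeasurePreserving (τ z) P P) {g : Ω → ℝ} (hg : Integrable g P)
    (hm : ∀ k, Integrable (fun ω => mF τ E0 V ω F (cube d k)) P)
    (hgm : ∀ k, ∀ᵐ ω ∂P, ∑ z ∈ cubeLattice d k, g (τ z ω) ≤ mF τ E0 V ω F (cube d k)) :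
    ∫ ω, g ω ∂P ≤ W0 P τ E0 V F := by
  have : Nonempty {k : ℕ // 0 < k} := ⟨1, one_pos⟩
  refine le_ciInf fun ⟨k, hk⟩ => (le_inv_mul_iff₀ (by positivity)).2 ?_
  calc (k : ℝ) ^ d * ∫ ω, g ω ∂P
      = ∫ ω, ∑ z ∈ cubeLattice d k, g (τ z ω) ∂P := by
        rw [integral_sum_comp_of_measurePreserving hτ hg, card_cubeLattice, Nat.cast_pow]
    _ ≤ ∫ ω, mF τ E0 V ω F (cube d k) ∂P :=
        integral_mono_ae (integrable_sum_comp_of_measurePreserving hτ hg _) (hm k) (hgm k)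

end HomogenizedDensity

section Growth

variable {P : Measure Ω} {τ : Zd d → Ω → Ω} {E0 : Finset (Zd d)} {V : Zd d → Ω → Rn n → ℝ}
  {lam : Zd d → Ω → ℝ} {p c : ℝ}

lemma exists_W0_le_mul_one_add_rpow [IsFiniteMeasure P] (hτ : ∀ z, MeasurePreserving (τ z) P P)
    (hVmeas : ∀ b ∈ E0, Measurable fun q : Ω × Rn n => V b q.1 q.2)
    (hV : ∀ b ∈ E0, ∀ ω r, 0 ≤ V b ω r) (hp : 0 ≤ p) (hc : 0 ≤ c)
    (hlam : ∀ b ∈ E0, Integrable (lam b) P) (hlam₀ : ∀ b ∈ E0, ∀ ω, 0 ≤ lam b ω)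
    (hVu : ∀ b ∈ E0, ∀ ω r, V b ω r ≤ c * (1 + lam b ω * (‖r‖ ^ p + 1))) :
    ∃ C, 0 ≤ C ∧ ∀ F : Rd d →L[ℝ] Rn n, W0 P τ E0 V F ≤ C * (1 + ‖F‖ ^ p) := by
  have hsum : Integrable (fun ω => ∑ b ∈ E0, (1 + lam b ω)) P :=
    integrable_finsetSum E0 fun b hb => (integrable_const 1).add (hlam b hb)
  refine ⟨∫ ω, c * ∑ b ∈ E0, (1 + lam b ω) ∂P, integral_nonneg fun ω => mul_nonneg hc <|
    Finset.sum_nonneg fun b hb => add_nonneg zero_le_one (hlam₀ b hb ω), fun F => ?_⟩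
  have hF := integrable_affineEnergy hVmeas hV hlam hVu F
  calc W0 P τ E0 V F ≤ ∫ ω, affineEnergy E0 V F ω ∂P := W0_le_integral_affineEnergy hτ hV hF
    _ ≤ ∫ ω, c * (∑ b ∈ E0, (1 + lam b ω)) * (1 + ‖F‖ ^ p) ∂P :=
        integral_mono hF ((hsum.const_mul c).mul_const _) (affineEnergy_le hp hc hlam₀ hVu F)
    _ = (∫ ω, c * ∑ b ∈ E0, (1 + lam b ω) ∂P) * (1 + ‖F‖ ^ p) := integral_mul_const _ _

lemma integrable_youngMinorant [IsFiniteMeasure P] {l : Ω → ℝ} (hl : Integrable l P)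
    (hl' : Integrable (fun ω => l ω ^ (-(1 / (p - 1)))) P) (t a : ℝ) :
    Integrable (fun ω => youngMinorant p c t a (l ω)) P :=
  (((integrable_const _).sub (hl'.const_mul _)).const_mul _).sub (hl.const_mul c)

lemma integral_youngMinorant [IsProbabilityMeasure P] {l : Ω → ℝ} (hl : Integrable l P)
    (hl' : Integrable (fun ω => l ω ^ (-(1 / (p - 1)))) P) (t a : ℝ) :
    ∫ ω, youngMinorant p c t a (l ω) ∂P =
      c⁻¹ * (p * t ^ (p - 1) * a - (p - 1) * t ^ p * ∫ ω, l ω ^ (-(1 / (p - 1))) ∂P)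
        - c * ∫ ω, l ω ∂P := by
  have htangent : Integrable (fun ω =>
      p * t ^ (p - 1) * a - (p - 1) * t ^ p * l ω ^ (-(1 / (p - 1)))) P :=
    (integrable_const _).sub (hl'.const_mul _)
  simp only [youngMinorant]
  rw [integral_sub (htangent.const_mul _) (hl.const_mul c), integral_const_mul, integral_const_mul,
    integral_sub (integrable_const _) (hl'.const_mul _), integral_const, probReal_univ, one_smul,
    integral_const_mul]

lemma mul_rpow_norm_map_bondDir_sub_le_W0 [IsProbabilityMeasure P]
    (hτ : ∀ z, MeasurePreserving (τ z) P P)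
    (hVmeas : ∀ b ∈ E0, Measurable fun q : Ω × Rn n => V b q.1 q.2)
    (hVcont : ∀ b ∈ E0, ∀ ω, Continuous (V b ω)) (hV : ∀ b ∈ E0, ∀ ω r, 0 ≤ V b ω r)
    {F : Rd d →L[ℝ] Rn n} (hF : Integrable (affineEnergy E0 V F) P) (hp : 1 < p) (hc : 0 < c)
    {b : Zd d} (hb : b ∈ E0) {l : Ω → ℝ} (hl : Integrable l P) (hl₀ : ∀ᵐ ω ∂P, 0 < l ω)
    (hl' : Integrable (fun ω => l ω ^ (-(1 / (p - 1)))) P)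
    (hVl : ∀ ω r, l ω * (‖r‖ ^ p / c - c) ≤ V b ω r) :
    c⁻¹ * ((∫ ω, l ω ^ (-(1 / (p - 1))) ∂P) ^ (1 - p) * ‖F (bondDir b)‖ ^ p) - c * ∫ ω, l ω ∂P
      ≤ W0 P τ E0 V F := by
  set M := ∫ ω, l ω ^ (-(1 / (p - 1))) ∂P
  have hM : 0 < M := integral_pos_of_ae_pos hl' (hl₀.mono fun _ hω => Real.rpow_pos_of_pos hω _)
  have hlτ : ∀ᵐ ω ∂P, ∀ z, 0 < l (τ z ω) :=
    ae_all_iff.2 fun z => (hτ z).quasiMeasurePreserving.ae hl₀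
  set a := ‖F (bondDir b)‖
  calc c⁻¹ * (M ^ (1 - p) * a ^ p) - c * ∫ ω, l ω ∂P
      = ∫ ω, youngMinorant p c (a / M) a (l ω) ∂P := by
        rw [integral_youngMinorant hl hl',
          mul_div_rpow_sub_one_mul_sub (zero_lt_one.trans hp).ne' (norm_nonneg _) hM]
    _ ≤ W0 P τ E0 V F :=
        integral_le_W0 hτ (integrable_youngMinorant hl hl' _ _)
          (integrable_mF_cube hτ hVmeas hVcont hV hF) fun k => hlτ.mono fun ω hω =>
            sum_youngMinorant_le_mF_cube hp hc (by positivity) hω hV hVl hb F k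

lemma exists_rpow_norm_map_bondDir_le_mul_W0_add_one [IsProbabilityMeasure P]
    (hτ : ∀ z, MeasurePreserving (τ z) P P)
    (hVmeas : ∀ b ∈ E0, Measurable fun q : Ω × Rn n => V b q.1 q.2)
    (hVcont : ∀ b ∈ E0, ∀ ω, Continuous (V b ω)) (hV : ∀ b ∈ E0, ∀ ω r, 0 ≤ V b ω r)
    (hF : ∀ F : Rd d →L[ℝ] Rn n, Integrable (affineEnergy E0 V F) P) (hp : 1 < p) (hc : 0 < c)
    {b : Zd d} (hb : b ∈ E0) {l : Ω → ℝ} (hl : Integrable l P) (hl₀ : ∀ ω, 0 ≤ l ω)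
    (hl' : ∫⁻ ω, ENNReal.ofReal (l ω) ^ (-(1 / (p - 1))) ∂P < ⊤)
    (hVl : ∀ ω r, l ω * (‖r‖ ^ p / c - c) ≤ V b ω r) :
    ∃ C, ∀ F : Rd d →L[ℝ] Rn n, ‖F (bondDir b)‖ ^ p ≤ C * (W0 P τ E0 V F + 1) := by
  have hp₁ : 0 < 1 / (p - 1) := one_div_pos.2 (sub_pos.2 hp)
  have hpos := ae_pos_of_lintegral_rpow_neg_lt_top hl.aemeasurable hp₁ hl'
  have hdual := integrable_rpow_of_lintegral_lt_top hl.aemeasurable hl₀ hl'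
  set M := ∫ ω, l ω ^ (-(1 / (p - 1))) ∂P
  have hM : 0 < M :=
    integral_pos_of_ae_pos hdual (hpos.mono fun _ hω => Real.rpow_pos_of_pos hω _)
  have hL : 0 ≤ ∫ ω, l ω ∂P := integral_nonneg hl₀
  refine ⟨M ^ (p - 1) * c * (1 + c * ∫ ω, l ω ∂P), fun F => ?_⟩
  have hlower :=
    mul_rpow_norm_map_bondDir_sub_le_W0 hτ hVmeas hVcont hV (hF F) hp hc hb hl hpos hdual hVl
  have hW : 0 ≤ W0 P τ E0 V F := W0_nonneg hV
  have hinv : M ^ (p - 1) * M ^ (1 - p) = 1 := by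
    rw [← Real.rpow_add hM, sub_add_sub_cancel, sub_self, Real.rpow_zero]
  calc ‖F (bondDir b)‖ ^ p
      = M ^ (p - 1) * c * (c⁻¹ * (M ^ (1 - p) * ‖F (bondDir b)‖ ^ p)) := by
        rw [mul_assoc, mul_inv_cancel_left₀ hc.ne', ← mul_assoc, hinv, one_mul]
    _ ≤ M ^ (p - 1) * c * (W0 P τ E0 V F + c * ∫ ω, l ω ∂P) := by
        gcongr
        exact sub_le_iff_le_add.1 hlower
    _ ≤ M ^ (p - 1) * c * ((1 + c * ∫ ω, l ω ∂P) * (W0 P τ E0 V F + 1)) := by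
        gcongr
        nlinarith [mul_nonneg (mul_nonneg hc.le hL) hW]
    _ = M ^ (p - 1) * c * (1 + c * ∫ ω, l ω ∂P) * (W0 P τ E0 V F + 1) := by ring

lemma exists_rpow_opNorm_le_mul_W0_add_one [IsProbabilityMeasure P]
    (hτ : ∀ z, MeasurePreserving (τ z) P P)
    (hE0 : ∀ i, stdb i ∈ E0) (hVmeas : ∀ b ∈ E0, Measurable fun q : Ω × Rn n => V b q.1 q.2)
    (hVcont : ∀ b ∈ E0, ∀ ω, Continuous (V b ω)) (hV : ∀ b ∈ E0, ∀ ω r, 0 ≤ V b ω r)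
    (hF : ∀ F : Rd d →L[ℝ] Rn n, Integrable (affineEnergy E0 V F) P) (hp : 1 < p) (hc : 0 < c)
    (hlam : ∀ b ∈ E0, Integrable (lam b) P) (hlam₀ : ∀ b ∈ E0, ∀ ω, 0 ≤ lam b ω)
    (hlam' : ∀ i, ∫⁻ ω, ENNReal.ofReal (lam (stdb i) ω) ^ (-(1 / (p - 1))) ∂P < ⊤)
    (hVl : ∀ b ∈ E0, ∀ ω r, lam b ω * (‖r‖ ^ p / c - c) ≤ V b ω r) :
    ∃ C, ∀ F : Rd d →L[ℝ] Rn n, ‖F‖ ^ p ≤ C * (W0 P τ E0 V F + 1) := by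
  choose C hC using fun i =>
    exists_rpow_norm_map_bondDir_le_mul_W0_add_one hτ hVmeas hVcont hV hF hp hc (hE0 i)
      (hlam _ (hE0 i)) (hlam₀ _ (hE0 i)) (hlam' i) (hVl _ (hE0 i))
  obtain ⟨K, hK⟩ := Finite.exists_le C
  obtain ⟨B, -, hB⟩ := exists_rpow_opNorm_le_of_basis (G := Rn n)
    (EuclideanSpace.basisFun (Fin d) ℝ).toBasis (zero_lt_one.trans hp)
  refine ⟨B * max K 0, fun F => ?_⟩
  have hW : 0 ≤ W0 P τ E0 V F + 1 := add_nonneg (W0_nonneg hV) zero_le_one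
  rw [mul_assoc]
  refine hB F (mul_nonneg (le_max_right K 0) hW) fun i => ?_
  calc ‖F ((EuclideanSpace.basisFun (Fin d) ℝ).toBasis i)‖ ^ p = ‖F (bondDir (stdb i))‖ ^ p := by
        rw [bondDir_stdb, OrthonormalBasis.coe_toBasis, EuclideanSpace.basisFun_apply]
    _ ≤ C i * (W0 P τ E0 V F + 1) := hC i F
    _ ≤ max K 0 * (W0 P τ E0 V F + 1) := by
        gcongr
        exact (hK i).trans (le_max_left K 0)

end Growth

theorem growth_W0_general {P : Measure Ω} [IsProbabilityMeasure P] {τ : Zd d → Ω → Ω}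
    (hτmp : ∀ z, MeasurePreserving (τ z) P P) {E0 : Finset (Zd d)} (_hE00 : (0 : Zd d) ∉ E0)
    (hE0b : ∀ i, stdb i ∈ E0) {p c₁ : ℝ} (hp : 1 < p) (hc₁ : 0 < c₁) {V : Zd d → Ω → Rn n → ℝ}
    (hVmeas : ∀ b ∈ E0, Measurable fun q : Ω × Rn n => V b q.1 q.2)
    (hVcont : ∀ b ∈ E0, ∀ ω, Continuous (V b ω)) (hVnn : ∀ b ∈ E0, ∀ ω r, 0 ≤ V b ω r)
    {lam : Zd d → Ω → ℝ} (hlamnn : ∀ b ∈ E0, ∀ ω, 0 ≤ lam b ω)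
    (hgrowth : ∀ b ∈ E0, ∀ ω r,
      lam b ω * (‖r‖ ^ p / c₁ - c₁) ≤ V b ω r ∧ V b ω r ≤ c₁ * (1 + lam b ω * (‖r‖ ^ p + 1)))
    (hlam : ∀ b ∈ E0, Integrable (lam b) P)
    (hlam' : ∀ i, ∫⁻ ω, ENNReal.ofReal (lam (stdb i) ω) ^ (-(1 / (p - 1))) ∂P < ⊤) :
    ∃ c₁' : ℝ, 0 < c₁' ∧ ∀ F : Rd d →L[ℝ] Rn n,
      (1 / c₁') * ‖F‖ ^ p - c₁' ≤ W0 P τ E0 V F ∧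
      W0 P τ E0 V F ≤ c₁' * (1 + ‖F‖ ^ p) := by
  have hVl := fun b hb ω r => (hgrowth b hb ω r).1
  have hVu := fun b hb ω r => (hgrowth b hb ω r).2
  obtain ⟨C, hC₀, hC⟩ := exists_W0_le_mul_one_add_rpow (n := n) hτmp hVmeas hVnn
    (zero_le_one.trans hp.le) hc₁.le hlam hlamnn hVu
  obtain ⟨B, hB⟩ := exists_rpow_opNorm_le_mul_W0_add_one hτmp hE0b hVmeas hVcont hVnn
    (integrable_affineEnergy hVmeas hVnn hlam hVu) hp hc₁ hlam hlamnn hlam' hVl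
  have hc' : 1 ≤ 1 + C + |B| := by linarith [abs_nonneg B]
  have hpos : 0 < 1 + C + |B| := zero_lt_one.trans_le hc'
  refine ⟨1 + C + |B|, hpos, fun F => ⟨?_, ?_⟩⟩
  · have hW : 0 ≤ W0 P τ E0 V F + 1 := add_nonneg (W0_nonneg hVnn) zero_le_one
    have hlower : 1 / (1 + C + |B|) * ‖F‖ ^ p ≤ W0 P τ E0 V F + 1 := by
      rw [one_div, inv_mul_le_iff₀ hpos]
      exact (hB F).trans (by gcongr; linarith [le_abs_self B])
    linarith
  · exact (hC F).trans (by gcongr; linarith [abs_nonneg B])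

/-- non-degenerate `p`-growth of the homogenized energy density,
Lemma 3.8 of the paper. -/
theorem growth_W0
    {d n : ℕ} (hd : 2 ≤ d) (hn : 1 ≤ n)
    {Ω : Type*} [MeasurableSpace Ω] (P : Measure Ω) [IsProbabilityMeasure P]
    (τ : Zd d → Ω → Ω) (hτ0 : τ 0 = id)
    (hτadd : ∀ x y : Zd d, τ (x + y) = τ x ∘ τ y)
    (hτmp : ∀ z : Zd d, MeasurePreserving (τ z) P P)
    (hτerg : ∀ B : Set Ω, MeasurableSet B → (∀ z : Zd d, τ z ⁻¹' B = B) → P B = 0 ∨ P B = 1)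
    (E0 : Finset (Zd d)) (hE00 : (0 : Zd d) ∉ E0) (hE0b : ∀ i : Fin d, stdb i ∈ E0)
    (p c₁ : ℝ) (hp : 1 < p) (hc₁ : 0 < c₁)
    (V : Zd d → Ω → Rn n → ℝ)
    (hVmeas : ∀ b ∈ E0, Measurable fun q : Ω × Rn n => V b q.1 q.2)
    (hVcont : ∀ b ∈ E0, ∀ ω : Ω, Continuous (V b ω))
    (hVnn : ∀ b ∈ E0, ∀ (ω : Ω) (r : Rn n), 0 ≤ V b ω r)
    (lam : Zd d → Ω → ℝ)
    (hlammeas : ∀ b ∈ E0, Measurable (lam b))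
    (hlamnn : ∀ b ∈ E0, ∀ ω : Ω, 0 ≤ lam b ω)
    (hgrowth : ∀ b ∈ E0, ∀ (ω : Ω) (r : Rn n),
      lam b ω * (‖r‖ ^ p / c₁ - c₁) ≤ V b ω r ∧ V b ω r ≤ c₁ * (1 + lam b ω * (‖r‖ ^ p + 1)))
    (α β : ℝ) (hα : 1 ≤ α) (hβ : 1 / (p - 1) ≤ β)
    (hmomα : ∀ b ∈ E0, ∫⁻ ω, ENNReal.ofReal (lam b ω ^ α) ∂P < ⊤)
    (hmomβ : ∀ i : Fin d, ∫⁻ ω, ENNReal.ofReal (lam (stdb i) ω) ^ (-β) ∂P < ⊤)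
    : ∃ c₁' : ℝ, 0 < c₁' ∧ ∀ F : Rd d →L[ℝ] Rn n,
      (1 / c₁') * ‖F‖ ^ p - c₁' ≤ W0 P τ E0 V F ∧
      W0 P τ E0 V F ≤ c₁' * (1 + ‖F‖ ^ p) := by
  exact growth_W0_general hτmp hE00 hE0b hp hc₁ hVmeas hVcont hVnn hlamnn hgrowth
    (fun b hb => integrable_of_lintegral_ofReal_rpow_lt_top (hlammeas b hb).aemeasurable
      (hlamnn b hb) hα (hmomα b hb))
    (fun i => lintegral_rpow_neg_lt_top_of_le (one_div_pos.2 (sub_pos.2 hp)).le hβ (hmomβ i))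

end StochHom
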